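/- Let U be a 2×2 complex unitary matrix, let ρ be a 2×2 complex matrix with ρ positive semidefinite and Tr ρ = 1, and define B₀(U) = (1/√3) • 1, B₁(U) = (1/(2√3)) • (Tr(Uᴴ*Y*U*Y) • 1 − (I * Tr(Uᴴ*Y*U*X)) • Z), B₂(U) = (1/(2√3)) • (Tr(Uᴴ*X*U*X) • 1 + (I * Tr(Uᴴ*X*U*Y)) • Z), B₃(U) = (1/(2√3)) • ((I * Tr(Uᴴ*Z*U*Y)) • 1 + Tr(Uᴴ*Z*U*X) • Z). Then Tr((∑_{k=0}^{3} B_k(U) * (Uᴴ*ρ*U) * (B_k(U))ᴴ) * Z) = Tr(Uᴴ*ρ*U*Z). -/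

import Mathlib

/-!
Every `B U k` has the form `α • 1 + β • Z`, hence is diagonal, so the expectation of `Z` in
`∑ k, B U k * M * (B U k)ᴴ` is `(∑ |α + β|²) M₀₀ - (∑ |α - β|²) M₁₁`. Write
`r a b = Tr (Uᴴ a U b)`. These numbers are real (`star_trace_conj`), and in each `B U k` one of
`α`, `β` is real and the other purely imaginary, so `|α ± β|²` has no cross term and both
sums equal `1/3 + (∑_{a ∈ {X, Y, Z}, b ∈ {X, Y}} r a b ^ 2) / 12`. Since `r / 2` is the rotation
matrix of conjugation by `U`, its columns are unit vectors: `∑_a r a b ^ 2 = 4`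
(`sum_sq_trace_conj`). Both sums are therefore `1/3 + 8/12 = 1`.
-/

open Matrix
open scoped ComplexOrder

/-- The Pauli-X matrix. -/
noncomputable def X : Matrix (Fin 2) (Fin 2) ℂ := !![0, 1; 1, 0]
/-- The Pauli-Y matrix. -/
noncomputable def Y : Matrix (Fin 2) (Fin 2) ℂ := !![0, -Complex.I; Complex.I, 0]
/-- The Pauli-Z matrix. -/
noncomputable def Z : Matrix (Fin 2) (Fin 2) ℂ := !![1, 0; 0, -1]

/-- The four Kraus operators (acting after `U†`) of the output channel of the 3-query
qubit shadow-inversion circuit. -/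
noncomputable def B (U : Matrix (Fin 2) (Fin 2) ℂ) : Fin 4 → Matrix (Fin 2) (Fin 2) ℂ :=
  ![(1 / (Real.sqrt 3 : ℂ)) • (1 : Matrix (Fin 2) (Fin 2) ℂ),
    (1 / (2 * (Real.sqrt 3 : ℂ))) •
      ((Matrix.trace (Uᴴ * Y * U * Y)) • (1 : Matrix (Fin 2) (Fin 2) ℂ)
        - (Complex.I * Matrix.trace (Uᴴ * Y * U * X)) • Z),
    (1 / (2 * (Real.sqrt 3 : ℂ))) •
      ((Matrix.trace (Uᴴ * X * U * X)) • (1 : Matrix (Fin 2) (Fin 2) ℂ)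
        + (Complex.I * Matrix.trace (Uᴴ * X * U * Y)) • Z),
    (1 / (2 * (Real.sqrt 3 : ℂ))) •
      ((Complex.I * Matrix.trace (Uᴴ * Z * U * Y)) • (1 : Matrix (Fin 2) (Fin 2) ℂ)
        + (Matrix.trace (Uᴴ * Z * U * X)) • Z)]

lemma X_isHermitian : Xᴴ = X := by
  ext i j; fin_cases i <;> fin_cases j <;> simp [X]

lemma Y_isHermitian : Yᴴ = Y := by
  ext i j; fin_cases i <;> fin_cases j <;> simp [Y]

lemma Z_isHermitian : Zᴴ = Z := by
  ext i j; fin_cases i <;> fin_cases j <;> simp [Z]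

lemma X_mul_X : X * X = 1 := by
  ext i j; fin_cases i <;> fin_cases j <;> simp [X, Matrix.mul_apply]

lemma Y_mul_Y : Y * Y = 1 := by
  ext i j; fin_cases i <;> fin_cases j <;> simp [Y, Matrix.mul_apply]

lemma trace_X : X.trace = 0 := by simp [X, Matrix.trace_fin_two]

lemma trace_Y : Y.trace = 0 := by simp [Y, Matrix.trace_fin_two]

lemma star_trace_conj (U A C : Matrix (Fin 2) (Fin 2) ℂ) (hA : Aᴴ = A) (hC : Cᴴ = C) :
    (starRingEnd ℂ) (Matrix.trace (Uᴴ * A * U * C)) = Matrix.trace (Uᴴ * A * U * C) := by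
  rw [starRingEnd_apply, ← Matrix.trace_conjTranspose]
  simp only [Matrix.conjTranspose_mul, Matrix.conjTranspose_conjTranspose, hA, hC]
  rw [Matrix.trace_mul_comm]
  simp only [Matrix.mul_assoc]

/-- Parseval's identity for the bilinear form `(A, M) ↦ Tr (A * M)` in the Pauli basis
`1, X, Y, Z`, with the component along `1` moved to the right-hand side. -/
lemma sum_sq_trace_pauli (M : Matrix (Fin 2) (Fin 2) ℂ) :
    (X * M).trace ^ 2 + (Y * M).trace ^ 2 + (Z * M).trace ^ 2
      = 2 * (M * M).trace - M.trace ^ 2 := by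
  simp [X, Y, Z, Matrix.trace_fin_two, Matrix.mul_apply, Fin.sum_univ_two, Matrix.vecMul,
    dotProduct]
  linear_combination ((M 0 1 - M 1 0) ^ 2) * Complex.I_sq

/-- For `C` a Pauli matrix: a column of the (doubled) rotation matrix of conjugation by `U` has
squared length `4`. -/
lemma sum_sq_trace_conj (U : Matrix (Fin 2) (Fin 2) ℂ) (hU : U * Uᴴ = 1)
    (C : Matrix (Fin 2) (Fin 2) ℂ) (hC : C * C = 1) (hC0 : C.trace = 0) :
    (Uᴴ * X * U * C).trace ^ 2 + (Uᴴ * Y * U * C).trace ^ 2 + (Uᴴ * Z * U * C).trace ^ 2 = 4 := by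
  have hU' : Uᴴ * U = 1 := mul_eq_one_comm.mp hU
  have key (A : Matrix (Fin 2) (Fin 2) ℂ) :
      (Uᴴ * A * U * C).trace = (A * (U * C * Uᴴ)).trace := by
    rw [Matrix.mul_assoc, Matrix.mul_assoc, Matrix.trace_mul_comm]
    simp only [Matrix.mul_assoc]
  have hsq : U * C * Uᴴ * (U * C * Uᴴ) = 1 := by
    calc U * C * Uᴴ * (U * C * Uᴴ) = U * (C * (Uᴴ * U) * C) * Uᴴ := by
          simp only [Matrix.mul_assoc]
      _ = 1 := by rw [hU', Matrix.mul_one, hC, Matrix.mul_one, hU]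
  have htr : (U * C * Uᴴ).trace = 0 := by
    rw [Matrix.trace_mul_comm, ← Matrix.mul_assoc, hU', Matrix.one_mul, hC0]
  rw [key, key, key, sum_sq_trace_pauli, hsq, htr, Matrix.trace_one]
  norm_num

/-- The expectation of `Z` after applying the diagonal operator `c • (α • 1 + β • Z)`. -/
lemma trace_diag_conj (c α β : ℂ) (M : Matrix (Fin 2) (Fin 2) ℂ) :
    Matrix.trace ((c • (α • (1 : Matrix (Fin 2) (Fin 2) ℂ) + β • Z)) * M *
        (c • (α • (1 : Matrix (Fin 2) (Fin 2) ℂ) + β • Z))ᴴ * Z)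
      = c * (starRingEnd ℂ) c *
        ((α + β) * ((starRingEnd ℂ) α + (starRingEnd ℂ) β) * M 0 0
          - (α - β) * ((starRingEnd ℂ) α - (starRingEnd ℂ) β) * M 1 1) := by
  simp [Z, Matrix.trace_fin_two, Matrix.mul_apply, Fin.sum_univ_two, Matrix.one_apply]
  ring

/-- Correctness of the 3-query qubit shadow inversion: the output channel
`N_U(ρ) = ∑ k, B k (U†ρU) (B k)ᴴ` reproduces the Pauli-Z expectation value of `U†ρU`. -/
theorem shadow_inversion_correct (U : Matrix (Fin 2) (Fin 2) ℂ) (hU : U * Uᴴ = 1)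
    (ρ : Matrix (Fin 2) (Fin 2) ℂ) (hρ : ρ.PosSemidef) (hρtr : Matrix.trace ρ = 1) :
    Matrix.trace ((∑ k : Fin 4, B U k * (Uᴴ * ρ * U) * (B U k)ᴴ) * Z)
      = Matrix.trace (Uᴴ * ρ * U * Z) := by
  have hX := sum_sq_trace_conj U hU X X_mul_X trace_X
  have hY := sum_sq_trace_conj U hU Y Y_mul_Y trace_Y
  have sYY := star_trace_conj U Y Y Y_isHermitian Y_isHermitian
  have sYX := star_trace_conj U Y X Y_isHermitian X_isHermitian
  have sXX := star_trace_conj U X X X_isHermitian X_isHermitian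
  have sXY := star_trace_conj U X Y X_isHermitian Y_isHermitian
  have sZY := star_trace_conj U Z Y Z_isHermitian Y_isHermitian
  have sZX := star_trace_conj U Z X Z_isHermitian X_isHermitian
  -- The Kraus operators in the shape required by `trace_diag_conj`.
  have h0 : B U 0 = (1 / (Real.sqrt 3 : ℂ)) •
      ((1 : ℂ) • (1 : Matrix (Fin 2) (Fin 2) ℂ) + (0 : ℂ) • Z) := by simp [B]
  have h1 : B U 1 = (1 / (2 * (Real.sqrt 3 : ℂ))) •
      ((Uᴴ * Y * U * Y).trace • (1 : Matrix (Fin 2) (Fin 2) ℂ)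
        + (-(Complex.I * (Uᴴ * Y * U * X).trace)) • Z) := by
    simp only [neg_smul, ← sub_eq_add_neg]; rfl
  have h2 : B U 2 = (1 / (2 * (Real.sqrt 3 : ℂ))) •
      ((Uᴴ * X * U * X).trace • (1 : Matrix (Fin 2) (Fin 2) ℂ)
        + (Complex.I * (Uᴴ * X * U * Y).trace) • Z) := rfl
  have h3 : B U 3 = (1 / (2 * (Real.sqrt 3 : ℂ))) •
      ((Complex.I * (Uᴴ * Z * U * Y).trace) • (1 : Matrix (Fin 2) (Fin 2) ℂ)
        + (Uᴴ * Z * U * X).trace • Z) := rfl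
  have hs : (Real.sqrt 3 : ℂ) * (Real.sqrt 3 : ℂ) = 3 := by
    rw [← Complex.ofReal_mul, Real.mul_self_sqrt (by norm_num)]; norm_num
  have hc0 : (1 / (Real.sqrt 3 : ℂ)) * (starRingEnd ℂ) (1 / (Real.sqrt 3 : ℂ)) = 1 / 3 := by
    simp only [map_div₀, map_one, Complex.conj_ofReal]
    rw [div_mul_div_comm, hs, one_mul]
  have hc1 : (1 / (2 * (Real.sqrt 3 : ℂ))) * (starRingEnd ℂ) (1 / (2 * (Real.sqrt 3 : ℂ)))
      = 1 / 12 := by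
    simp only [map_div₀, map_mul, map_one, map_ofNat, Complex.conj_ofReal]
    rw [div_mul_div_comm, mul_mul_mul_comm, hs]; norm_num
  have hZ (M : Matrix (Fin 2) (Fin 2) ℂ) : (M * Z).trace = M 0 0 - M 1 1 := by
    simp [Z, Matrix.trace_fin_two, Matrix.mul_apply, Fin.sum_univ_two, sub_eq_add_neg]
  rw [hZ (Uᴴ * ρ * U)]
  generalize Uᴴ * ρ * U = M
  rw [Fin.sum_univ_four, Matrix.add_mul, Matrix.add_mul, Matrix.add_mul, Matrix.trace_add,
    Matrix.trace_add, Matrix.trace_add, h0, h1, h2, h3]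
  simp only [trace_diag_conj, hc0, hc1, map_neg, map_mul, map_one, map_zero, Complex.conj_I,
    sYY, sYX, sXX, sXY, sZY, sZX]
  generalize (Uᴴ * Y * U * Y).trace = yy at *
  generalize (Uᴴ * Y * U * X).trace = yx at *
  generalize (Uᴴ * X * U * X).trace = xx at *
  generalize (Uᴴ * X * U * Y).trace = xy at *
  generalize (Uᴴ * Z * U * Y).trace = zy at *
  generalize (Uᴴ * Z * U * X).trace = zx at *
  linear_combination (M 0 0 - M 1 1) / 12 * (hX + hY)
    - (M 0 0 - M 1 1) / 12 * (yx ^ 2 + xy ^ 2 + zy ^ 2) * Complex.I_sq
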